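/- arXiv:2009.00503 — 3 statements merged into one kernel-verified Lean document; each statement's English description precedes it below -/
import Mathlib

section
/- Let ν be a probability measure on a measurable space 𝒳, let w : 𝒳 → [0,∞) be measurable, and let μ = ν.withDensity w be a probability measure (so w is the density of μ with respect to ν). Let T : 𝒳 → [0,1]^p be measurable with pushforward T_*ν equal to λ_p, and let Q : [0,1]^p → 𝒳 be measurable with Q(T(x)) = x for ν-almost every x. Then the pushforward T_*μ equals λ_p.withDensity (w ∘ Q); that is, if X has law μ, then U = T(X) has density d(u) = w(Q(u)) with respect to λ_p. (This is the claim of Proposition 1 that the likelihood ratio d(u) = f(Q(u))/g(Q(u)) is the density of the Rosenblatt-transformed vector U = G_R(X).) -/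
open MeasureTheory ProbabilityTheory

/-- The uniform (normalized Lebesgue) probability measure on the unit cube `[0,1]^p`. -/
noncomputable def cubeMeasure (p : ℕ) : Measure (Fin p → ℝ) :=
  Measure.pi fun _ => volume.restrict (Set.Icc (0:ℝ) 1)

/-!
Change of variables along `T` gives `∫_{T⁻¹ s} f ∘ T dν = ∫_s f d(T_*ν)`. Since `Q` inverts `T`
almost everywhere, `w` agrees `ν`-a.e. with `(w ∘ Q) ∘ T`, so this applies with `f = w ∘ Q`.
-/

section Pushforward

variable {α β : Type*} [MeasurableSpace α] [MeasurableSpace β] {ν : Measure α} {T : α → β}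

theorem map_withDensity_comp {f : β → ENNReal} (hf : AEMeasurable f (ν.map T))
    (hT : AEMeasurable T ν) :
    (ν.withDensity (f ∘ T)).map T = (ν.map T).withDensity f := by
  have hT_density : AEMeasurable T (ν.withDensity (f ∘ T)) :=
    hT.mono_ac (withDensity_absolutelyContinuous ν (f ∘ T))
  ext s hs
  have restrict_map : (ν.map T).restrict s = (ν.restrict (T ⁻¹' s)).map T :=
    Measure.restrict_map_of_aemeasurable hT hs
  calc (ν.withDensity (f ∘ T)).map T s
      = ν.withDensity (f ∘ T) (T ⁻¹' s) := Measure.map_apply_of_aemeasurable hT_density hs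
    _ = ∫⁻ x in T ⁻¹' s, f (T x) ∂ν := withDensity_apply₀ _ (hT.nullMeasurableSet_preimage hs)
    _ = ∫⁻ y, f y ∂(ν.restrict (T ⁻¹' s)).map T :=
      (lintegral_map' (restrict_map ▸ hf.restrict) hT.restrict).symm
    _ = ∫⁻ y in s, f y ∂(ν.map T) := by rw [restrict_map]
    _ = (ν.map T).withDensity f s := (withDensity_apply _ hs).symm

theorem map_map_eq_self_of_ae_leftInverse {Q : β → α} (hQ : AEMeasurable Q (ν.map T))
    (hT : AEMeasurable T ν) (hQT : ∀ᵐ x ∂ν, Q (T x) = x) :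
    (ν.map T).map Q = ν :=
  calc (ν.map T).map Q = ν.map (Q ∘ T) := AEMeasurable.map_map_of_aemeasurable hQ hT
    _ = ν.map id := Measure.map_congr hQT
    _ = ν := Measure.map_id

theorem pushforward_withDensity_rosenblatt_general {w : α → ENNReal} (hw : AEMeasurable w ν)
    (hT : AEMeasurable T ν) {Q : β → α} (hQ : AEMeasurable Q (ν.map T))
    (hQT : ∀ᵐ x ∂ν, Q (T x) = x) :
    (ν.withDensity w).map T = (ν.map T).withDensity (w ∘ Q) := by
  have hwQ : AEMeasurable (w ∘ Q) (ν.map T) := by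
    rw [← map_map_eq_self_of_ae_leftInverse hQ hT hQT] at hw
    exact hw.comp_aemeasurable hQ
  have hw_factor : w =ᵐ[ν] (w ∘ Q) ∘ T := hQT.mono fun _ hx => (congrArg w hx).symm
  rw [withDensity_congr_ae hw_factor, map_withDensity_comp hwQ hT]

end Pushforward

/-- **Proposition 1 (first claim).** If `μ = ν.withDensity w` is a probability measure,
`T` pushes `ν` forward to the uniform measure on `[0,1]^p`, and `Q ∘ T = id` `ν`-a.e.,
then `T` pushes `μ` forward to `λ_p.withDensity (w ∘ Q)`: the likelihood ratio
`d(u) = w(Q(u))` is the density of the Rosenblatt-transformed vector `U = T(X)`. -/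
theorem pushforward_withDensity_rosenblatt
    {𝒳 : Type*} [MeasurableSpace 𝒳] (p : ℕ)
    (ν : Measure 𝒳) [IsProbabilityMeasure ν]
    (w : 𝒳 → ENNReal) (hw : Measurable w)
    (μ : Measure 𝒳) (hμ : μ = ν.withDensity w) [IsProbabilityMeasure μ]
    (T : 𝒳 → (Fin p → ℝ)) (hT : Measurable T)
    (hTν : Measure.map T ν = cubeMeasure p)
    (Q : (Fin p → ℝ) → 𝒳) (hQ : Measurable Q)
    (hQT : ∀ᵐ x ∂ν, Q (T x) = x) :
    Measure.map T μ = (cubeMeasure p).withDensity (w ∘ Q) := by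
  rw [hμ, pushforward_withDensity_rosenblatt_general hw.aemeasurable hT.aemeasurable
    hQ.aemeasurable hQT, hTν]
end

section
/- Let ρ be a probability measure on ℝ × ℝ. Let F₁ denote the cumulative distribution function of the first marginal ρ.fst, and assume F₁ is continuous. For a ∈ ℝ let F₂(a,·) denote the conditional cumulative distribution function of the second coordinate given that the first coordinate equals a (Mathlib's condCDF ρ a), and assume that for ρ.fst-almost every a the map x ↦ F₂(a,x) is continuous. Then the pushforward of ρ under the Rosenblatt transform (a,x) ↦ (F₁(a), F₂(a,x)) equals λ_2, the uniform probability measure on [0,1]². (Rosenblatt's theorem in the bivariate case: under the null hypothesis F ≡ G, the transformed vector U = G_R(X) is uniform on the unit square.) -/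
/-!
The first coordinate is handled by the probability integral transform for `F₁`. Disintegrating `ρ`
over its first marginal, the second coordinate has conditional law `(condCDF ρ a).measure`, which
the same transform maps to the uniform law for almost every `a`. As this image does not depend on
`a`, the transformed coordinates are independent.
-/

open MeasureTheory ProbabilityTheory

section IntegralTransform

open Set Filter Topology

theorem Ioo_subset_range_of_tendsto {X Y : Type*} [TopologicalSpace X] [PreconnectedSpace X]
    [LinearOrder Y] [TopologicalSpace Y] [OrderClosedTopology Y] {f : X → Y} (hf : Continuous f)
    {p q : Filter X} [NeBot p] [NeBot q] {l u : Y} (hl : Tendsto f p (𝓝 l))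
    (hu : Tendsto f q (𝓝 u)) : Ioo l u ⊆ range f := by
  rw [← image_univ]
  exact isPreconnected_univ.intermediate_value_Ioo (by simp) (by simp) hf.continuousOn hl hu

variable {R : Type*} [ConditionallyCompleteLinearOrder R] [DenselyOrdered R] [TopologicalSpace R]
  [OrderTopology R] [SecondCountableTopology R] [MeasurableSpace R] [BorelSpace R]
  {F : StieltjesFunction R} {l u : ℝ}

theorem measure_preimage_Iic_stieltjesFunction (hF : Continuous F) (hl : Tendsto F atBot (𝓝 l))
    (hu : Tendsto F atTop (𝓝 u)) {t : ℝ} (ht : t ∈ Ico l u) :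
    F.measure (F ⁻¹' Iic t) = ENNReal.ofReal (t - l) := by
  have hrange := Ioo_subset_range_of_tendsto hF hl hu
  apply le_antisymm
  · have upper : ∀ s ∈ Ioo t u, F.measure (F ⁻¹' Iic t) ≤ ENNReal.ofReal (s - l) := by
      intro s hs
      obtain ⟨d, rfl⟩ := hrange ⟨ht.1.trans_lt hs.1, hs.2⟩
      rw [← F.measure_Iic hl]
      exact measure_mono fun x hx => (F.mono.reflect_lt (hx.trans_lt hs.1)).le
    have lim : Tendsto (fun s => ENNReal.ofReal (s - l)) (𝓝[>] t) (𝓝 (ENNReal.ofReal (t - l))) :=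
      ((ENNReal.continuous_ofReal.comp (continuous_sub_right l)).tendsto t).mono_left
        nhdsWithin_le_nhds
    exact ge_of_tendsto lim (eventually_of_mem (Ioo_mem_nhdsGT ht.2) upper)
  · obtain rfl | hlt := ht.1.eq_or_lt
    · simp
    · obtain ⟨c, rfl⟩ := hrange ⟨hlt, ht.2⟩
      rw [← F.measure_Iic hl]
      exact measure_mono fun x hx => F.mono hx

theorem measurePreserving_stieltjesFunction (hF : Continuous F) (hl : Tendsto F atBot (𝓝 l))
    (hu : Tendsto F atTop (𝓝 u)) :
    MeasurePreserving F F.measure (volume.restrict (Icc l u)) := by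
  refine ⟨hF.measurable, ?_⟩
  have := F.isFiniteMeasure hl hu
  refine Measure.ext_of_Iic _ _ fun t => ?_
  rw [Measure.map_apply hF.measurable measurableSet_Iic, Measure.restrict_apply measurableSet_Iic]
  obtain htl | hlt := lt_or_ge t l
  · have hpre : F ⁻¹' Iic t = ∅ :=
      eq_empty_of_forall_notMem fun x hx => (hx.trans_lt htl).not_ge (F.mono.le_of_tendsto hl x)
    have hinter : Iic t ∩ Icc l u = ∅ :=
      eq_empty_of_forall_notMem fun x hx => (hx.1.trans_lt htl).not_ge hx.2.1
    rw [hpre, hinter, measure_empty, measure_empty]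
  obtain htu | hut := lt_or_ge t u
  · have hinter : Iic t ∩ Icc l u = Icc l t := by grind
    rw [hinter, Real.volume_Icc, measure_preimage_Iic_stieltjesFunction hF hl hu ⟨hlt, htu⟩]
  · have hpre : F ⁻¹' Iic t = univ :=
      eq_univ_of_forall fun x => (F.mono.ge_of_tendsto hu x).trans hut
    have hinter : Iic t ∩ Icc l u = Icc l u :=
      inter_eq_right.mpr fun x hx => hx.2.trans hut
    rw [hpre, hinter, Real.volume_Icc, F.measure_univ hl hu]

theorem measurePreserving_cdf (μ : Measure ℝ) [IsProbabilityMeasure μ] (h : Continuous (cdf μ)) :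
    MeasurePreserving (cdf μ) μ (volume.restrict (Icc 0 1)) := by
  simpa only [measure_cdf] using
    measurePreserving_stieltjesFunction h (tendsto_cdf_atBot μ) (tendsto_cdf_atTop μ)

end IntegralTransform

section Kernel

variable {α β γ δ : Type*} [MeasurableSpace α] [MeasurableSpace β] [MeasurableSpace γ]
  [MeasurableSpace δ]

theorem measurePreserving_skew_compProd {μ : Measure α} [SFinite μ] {κ : Kernel α γ}
    [IsSFiniteKernel κ] {μ' : Measure β} {ν : Measure δ} [SFinite ν] {f : α → β} {g : α → γ → δ}
    (hf : MeasurePreserving f μ μ') (hg : Measurable (Function.uncurry g))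
    (h : ∀ᵐ a ∂μ, (κ a).map (g a) = ν) :
    MeasurePreserving (fun p => (f p.1, g p.1 p.2)) (μ ⊗ₘ κ) (μ'.prod ν) := by
  have hmeas : Measurable fun p : α × γ => (f p.1, g p.1 p.2) :=
    (hf.measurable.comp measurable_fst).prodMk hg
  refine ⟨hmeas, Measure.ext fun s hs => ?_⟩
  rw [Measure.map_apply hmeas hs, Measure.compProd_apply (hmeas hs), Measure.prod_apply hs,
    ← hf.lintegral_comp (measurable_measure_prodMk_left hs)]
  refine lintegral_congr_ae ?_
  filter_upwards [h] with a ha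
  rw [← ha, Measure.map_apply hg.of_uncurry_left (measurable_prodMk_left hs)]
  rfl

theorem measurable_kernel_Iic {R : Type*} [LinearOrder R] [TopologicalSpace R]
    [OrderClosedTopology R] [SecondCountableTopology R] [MeasurableSpace R]
    [OpensMeasurableSpace R] (κ : Kernel α R) [IsSFiniteKernel κ] :
    Measurable fun p : α × R => κ p.1 (Set.Iic p.2) :=
  Kernel.measurable_kernel_prodMk_left (κ := κ.prodMkRight R)
    (measurableSet_le measurable_snd (measurable_snd.comp measurable_fst))

end Kernel

section CondCDF

variable {α : Type*} [MeasurableSpace α]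

/-- The regular conditional law of the second coordinate given the first under `ρ`, in the version
whose cdf at every point is `condCDF ρ`. -/
noncomputable def condCDFKernel (ρ : Measure (α × ℝ)) : Kernel α ℝ :=
  ⟨fun a => (condCDF ρ a).measure, measurable_measure_condCDF ρ⟩

theorem condCDFKernel_apply (ρ : Measure (α × ℝ)) (a : α) :
    condCDFKernel ρ a = (condCDF ρ a).measure :=
  rfl

instance isMarkovKernel_condCDFKernel (ρ : Measure (α × ℝ)) : IsMarkovKernel (condCDFKernel ρ) :=
  ⟨instIsProbabilityMeasureCondCDF ρ⟩

theorem fst_compProd_condCDFKernel (ρ : Measure (α × ℝ)) [IsFiniteMeasure ρ] :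
    ρ.fst ⊗ₘ condCDFKernel ρ = ρ := by
  ext s hs
  rw [Measure.compProd_apply hs]
  exact lintegral_toKernel_mem (isCondKernelCDF_condCDF ρ) () hs

theorem measurable_uncurry_condCDF (ρ : Measure (α × ℝ)) :
    Measurable (Function.uncurry fun a => condCDF ρ a) := by
  simpa [Function.uncurry_def, condCDFKernel_apply, measure_condCDF_Iic, condCDF_nonneg] using
    (measurable_kernel_Iic (condCDFKernel ρ)).ennreal_toReal

theorem measurePreserving_condCDF {β : Type*} [MeasurableSpace β] {ρ : Measure (α × ℝ)}
    [IsFiniteMeasure ρ] {μ' : Measure β} {f : α → β} (hf : MeasurePreserving f ρ.fst μ')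
    (h : ∀ᵐ a ∂ρ.fst, Continuous (condCDF ρ a)) :
    MeasurePreserving (fun z => (f z.1, condCDF ρ z.1 z.2)) ρ
      (μ'.prod (volume.restrict (Set.Icc 0 1))) := by
  have huniform : ∀ᵐ a ∂ρ.fst,
      (condCDFKernel ρ a).map (condCDF ρ a) = volume.restrict (Set.Icc 0 1) := by
    filter_upwards [h] with a ha
    exact (measurePreserving_stieltjesFunction ha (tendsto_condCDF_atBot ρ a)
      (tendsto_condCDF_atTop ρ a)).map_eq
  simpa only [fst_compProd_condCDFKernel] using
    measurePreserving_skew_compProd hf (measurable_uncurry_condCDF ρ) huniform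

end CondCDF

/-- **Rosenblatt's theorem (bivariate case).** If `ρ` is a probability measure on `ℝ × ℝ`
whose first-marginal cdf `F₁` is continuous and whose conditional cdfs `F₂(a,·) = condCDF ρ a`
are continuous for `ρ.fst`-a.e. `a`, then the pushforward of `ρ` under the Rosenblatt
transform `(a, x) ↦ (F₁ a, condCDF ρ a x)` is the uniform probability measure on `[0,1]²`. -/
theorem rosenblatt_bivariate_uniform
    (ρ : Measure (ℝ × ℝ)) [IsProbabilityMeasure ρ]
    (hF₁ : Continuous (cdf ρ.fst))
    (hF₂ : ∀ᵐ a ∂ρ.fst, Continuous (condCDF ρ a)) :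
    Measure.map (fun z : ℝ × ℝ => (cdf ρ.fst z.1, condCDF ρ z.1 z.2)) ρ =
      (volume.restrict (Set.Icc (0:ℝ) 1)).prod (volume.restrict (Set.Icc (0:ℝ) 1)) :=
  (measurePreserving_condCDF (measurePreserving_cdf ρ.fst hF₁) hF₂).map_eq
end

section
/- Let μ be a purely atomic (discrete) probability measure on ℝ, with countable support S and point masses p(x) = μ({x}) for x ∈ S. Define the mid-distribution function G_mid(x) = μ((−∞, x]) − (1/2)·p(x). Then ∫ G_mid(x) dμ(x) = 1/2 and ∫ (G_mid(x) − 1/2)² dμ(x) = (1 − ∑_{x∈S} p(x)³)/12; that is, if X ~ μ, then G_mid(X) has mean 1/2 and variance (1 − ∑_{x∈S} p(x)³)/12. -/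
open MeasureTheory

/-!
Write `F x = μ (Iic x)` and `F⁻ x = μ (Iio x)`. Since `{y ≤ x}` and `{x < y}` partition the plane,
Tonelli's theorem gives the integration by parts formula
`∫ ν(Iic x) dμ(x) + ∫ μ(Iio x) dν(x) = μ(α) ν(α)`.
With `ν = μ` it reads `∫ (F + F⁻) dμ = 1`, which is the mean. With `dν = (F + F⁻) dμ`, for which
`ν(Iic x) = F(x)²`, it reads `∫ (F² + F⁻F + F⁻²) dμ = 1`, the discontinuous form of
`∫ 3F² dF = 1`. As the jump of `F` at `x` is `μ {x}`, the square of the mid-distribution function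
`(F + F⁻) / 2` differs from a third of this integrand by `μ {x}² / 12`, and the integral of this
correction is a sum over the atoms.
-/

open Set
open scoped ENNReal

section Atoms

variable {α : Type*} [MeasurableSpace α] [MeasurableSingletonClass α]

lemma countable_setOf_measure_singleton_ne_zero (μ : Measure α) [SFinite μ] :
    {x | μ {x} ≠ 0}.Countable := by
  simpa [pos_iff_ne_zero] using Measure.countable_meas_level_set_pos (μ := μ) measurable_id

lemma measurable_measure_singleton (μ : Measure α) [SFinite μ] :
    Measurable fun x ↦ μ {x} :=
  (measurable_const (a := 0)).measurable_of_countable_ne <| by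
    simpa only [ne_comm] using countable_setOf_measure_singleton_ne_zero μ

lemma integrable_measureReal_singleton_pow (μ : Measure α) [IsFiniteMeasure μ] (n : ℕ) :
    Integrable (fun x ↦ μ.real {x} ^ n) μ := by
  refine .of_bound (C := μ.real univ ^ n) ?_ (.of_forall fun x ↦ ?_)
  · exact ((measurable_measure_singleton μ).ennreal_toReal.pow_const n).aestronglyMeasurable
  · rw [Real.norm_of_nonneg (by positivity)]
    gcongr
    exacts [measure_ne_top _ _, subset_univ _]

lemma integral_measureReal_singleton_pow (μ : Measure α) [IsFiniteMeasure μ] {S : Set α}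
    (hS : ∀ x ∉ S, μ {x} = 0) {n : ℕ} (hn : n ≠ 0) :
    ∫ x, μ.real {x} ^ n ∂μ = ∑' x : S, μ.real {(x : α)} ^ (n + 1) := by
  set A := {x | μ {x} ≠ 0}
  have hA : A.Countable := countable_setOf_measure_singleton_ne_zero μ
  have A_subset : A ⊆ S := fun x hx ↦ by_contra fun hxS ↦ hx (hS x hxS)
  have real_eq_zero {x : α} (hx : x ∉ A) : μ.real {x} = 0 := by
    rw [measureReal_def, not_not.mp hx, ENNReal.toReal_zero]
  have support_subset : Function.support (fun x ↦ μ.real {x} ^ (n + 1)) ⊆ A :=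
    Function.support_subset_iff'.mpr fun x hx ↦ by rw [real_eq_zero hx, zero_pow n.succ_ne_zero]
  calc ∫ x, μ.real {x} ^ n ∂μ = ∫ x in A, μ.real {x} ^ n ∂μ :=
        (setIntegral_eq_integral_of_forall_compl_eq_zero fun x hx ↦ by
          rw [real_eq_zero hx, zero_pow hn]).symm
    _ = ∑' x : A, μ.real {(x : α)} ^ (n + 1) := by
        rw [setIntegral_countable _ hA (integrable_measureReal_singleton_pow μ n).integrableOn]
        simp_rw [smul_eq_mul, pow_succ']
    _ = ∑' x : S, μ.real {(x : α)} ^ (n + 1) := by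
        rw [tsum_subtype_eq_of_support_subset support_subset,
          tsum_subtype_eq_of_support_subset (support_subset.trans A_subset)]

end Atoms

/-- The mid-distribution function `G_mid` of `μ`: the distribution function with the point mass at
`x` counted for one half, which makes its mean `1 / 2` even when `μ` has atoms. It is real-valued,
so it is meaningful for finite `μ` only. -/
noncomputable def midDistribution {α : Type*} [Preorder α] [MeasurableSpace α] (μ : Measure α)
    (x : α) : ℝ :=
  μ.real (Iic x) - (1 / 2) * μ.real {x}

section PartialOrder

variable {α : Type*} [PartialOrder α] [MeasurableSpace α] [MeasurableSingletonClass α]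

lemma measureReal_Iio_add_measureReal_singleton (μ : Measure α) [IsFiniteMeasure μ] (x : α) :
    μ.real (Iio x) + μ.real {x} = μ.real (Iic x) := by
  rw [← measureReal_union (by simp) (measurableSet_singleton x), Iio_union_right]

lemma midDistribution_eq_add_div_two (μ : Measure α) [IsFiniteMeasure μ] (x : α) :
    midDistribution μ x = (μ.real (Iic x) + μ.real (Iio x)) / 2 := by
  rw [midDistribution, ← measureReal_Iio_add_measureReal_singleton]
  ring

lemma midDistribution_sq (μ : Measure α) [IsFiniteMeasure μ] (x : α) :
    midDistribution μ x ^ 2 =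
      (μ.real (Iic x) ^ 2 + μ.real (Iic x) * μ.real (Iio x) + μ.real (Iio x) ^ 2) / 3 -
        μ.real {x} ^ 2 / 12 := by
  rw [midDistribution, ← measureReal_Iio_add_measureReal_singleton]
  ring

lemma abs_midDistribution_le (μ : Measure α) [IsFiniteMeasure μ] (x : α) :
    |midDistribution μ x| ≤ μ.real univ := by
  rw [midDistribution_eq_add_div_two, abs_of_nonneg (by positivity)]
  linarith [measureReal_mono (μ := μ) (subset_univ (Iic x)),
    measureReal_mono (μ := μ) (subset_univ (Iio x))]

end PartialOrder

section LinearOrder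

variable {α : Type*} [LinearOrder α] [TopologicalSpace α] [OrderClosedTopology α]
  [SecondCountableTopology α] [MeasurableSpace α] [OpensMeasurableSpace α]

lemma measurable_measure_Iic (μ : Measure α) [SFinite μ] : Measurable fun x ↦ μ (Iic x) :=
  measurable_measure_prodMk_left (measurableSet_le measurable_snd measurable_fst)

lemma measurable_measure_Iio (μ : Measure α) [SFinite μ] : Measurable fun x ↦ μ (Iio x) :=
  measurable_measure_prodMk_left (measurableSet_lt measurable_snd measurable_fst)

lemma lintegral_measure_Iic_add_lintegral_measure_Iio (μ ν : Measure α) [SFinite μ] [SFinite ν] :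
    ∫⁻ x, ν (Iic x) ∂μ + ∫⁻ x, μ (Iio x) ∂ν = μ univ * ν univ := by
  have hle : MeasurableSet {p : α × α | p.2 ≤ p.1} := measurableSet_le measurable_snd measurable_fst
  calc ∫⁻ x, ν (Iic x) ∂μ + ∫⁻ x, μ (Iio x) ∂ν
      = μ.prod ν {p | p.2 ≤ p.1} + μ.prod ν {p | p.2 ≤ p.1}ᶜ := by
        rw [Measure.prod_apply hle, Measure.prod_apply_symm hle.compl]
        simp only [preimage_ofPred_eq, compl_ofPred, not_le]
        rfl
    _ = μ univ * ν univ := by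
        rw [measure_add_measure_compl hle, ← univ_prod_univ, Measure.prod_prod]

lemma lintegral_measure_Iic_add_measure_Iio (μ : Measure α) [SFinite μ] :
    ∫⁻ x, (μ (Iic x) + μ (Iio x)) ∂μ = μ univ ^ 2 := by
  rw [lintegral_add_left (measurable_measure_Iic μ),
    lintegral_measure_Iic_add_lintegral_measure_Iio, sq]

lemma setLIntegral_measure_Iic_add_measure_Iio (μ : Measure α) [SFinite μ] {s : Set α}
    (hs : IsLowerSet s) (hsm : MeasurableSet s) :
    ∫⁻ x in s, (μ (Iic x) + μ (Iio x)) ∂μ = μ s ^ 2 := by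
  rw [← Measure.restrict_apply_univ s, ← lintegral_measure_Iic_add_measure_Iio]
  refine setLIntegral_congr_fun hsm fun x hx ↦ ?_
  simp only [Measure.restrict_eq_self μ (hs.Iic_subset hx),
    Measure.restrict_eq_self μ (Iio_subset_Iic_self.trans (hs.Iic_subset hx))]

lemma lintegral_sq_measure_Iic_add_mul_add_sq_measure_Iio (μ : Measure α) [SFinite μ] :
    ∫⁻ x, (μ (Iic x) ^ 2 + μ (Iic x) * μ (Iio x) + μ (Iio x) ^ 2) ∂μ = μ univ ^ 3 := by
  set f : α → ℝ≥0∞ := fun x ↦ μ (Iic x) + μ (Iio x)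
  have hf : Measurable f := (measurable_measure_Iic μ).add (measurable_measure_Iio μ)
  have withDensity_Iic (x : α) : μ.withDensity f (Iic x) = μ (Iic x) ^ 2 := by
    rw [withDensity_apply _ measurableSet_Iic,
      setLIntegral_measure_Iic_add_measure_Iio μ (isLowerSet_Iic x) measurableSet_Iic]
  have withDensity_univ : μ.withDensity f univ = μ univ ^ 2 := by
    rw [withDensity_apply _ .univ, Measure.restrict_univ, lintegral_measure_Iic_add_measure_Iio]
  calc ∫⁻ x, (μ (Iic x) ^ 2 + μ (Iic x) * μ (Iio x) + μ (Iio x) ^ 2) ∂μ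
      = ∫⁻ x, (μ (Iic x) ^ 2 + f x * μ (Iio x)) ∂μ := by
        simp only [f, add_mul, sq, add_assoc]
    _ = ∫⁻ x, μ.withDensity f (Iic x) ∂μ + ∫⁻ x, μ (Iio x) ∂μ.withDensity f := by
        rw [lintegral_add_left ((measurable_measure_Iic μ).pow_const 2),
          lintegral_withDensity_eq_lintegral_mul μ hf (measurable_measure_Iio μ)]
        simp only [withDensity_Iic, Pi.mul_apply]
    _ = μ univ ^ 3 := by
        rw [lintegral_measure_Iic_add_lintegral_measure_Iio, withDensity_univ, ← pow_succ']

lemma memLp_midDistribution (μ : Measure α) [IsFiniteMeasure μ] (p : ℝ≥0∞) :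
    MemLp (midDistribution μ) p μ := by
  refine .of_bound ?_ (μ.real univ) (.of_forall (abs_midDistribution_le μ))
  exact ((measurable_measure_Iic μ).ennreal_toReal.sub
    ((measurable_measure_singleton μ).ennreal_toReal.const_mul _)).aestronglyMeasurable

lemma integral_midDistribution (μ : Measure α) [IsFiniteMeasure μ] :
    ∫ x, midDistribution μ x ∂μ = μ.real univ ^ 2 / 2 := by
  have hf : Measurable fun x ↦ μ (Iic x) + μ (Iio x) :=
    (measurable_measure_Iic μ).add (measurable_measure_Iio μ)
  calc ∫ x, midDistribution μ x ∂μ = (∫ x, (μ (Iic x) + μ (Iio x)).toReal ∂μ) / 2 := by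
        simp_rw [midDistribution_eq_add_div_two, integral_div, measureReal_def,
          ENNReal.toReal_add (measure_ne_top μ _) (measure_ne_top μ _)]
    _ = μ.real univ ^ 2 / 2 := by
        rw [integral_toReal hf.aemeasurable (.of_forall fun x ↦ by finiteness),
          lintegral_measure_Iic_add_measure_Iio, ENNReal.toReal_pow, measureReal_def]

lemma integral_midDistribution_sq (μ : Measure α) [IsFiniteMeasure μ] {S : Set α}
    (hS : ∀ x ∉ S, μ {x} = 0) :
    ∫ x, midDistribution μ x ^ 2 ∂μ =
      μ.real univ ^ 3 / 3 - (∑' x : S, μ.real {(x : α)} ^ 3) / 12 := by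
  set g : α → ℝ≥0∞ := fun x ↦ μ (Iic x) ^ 2 + μ (Iic x) * μ (Iio x) + μ (Iio x) ^ 2
  have hg : Measurable g :=
    (((measurable_measure_Iic μ).pow_const 2).add
      ((measurable_measure_Iic μ).mul (measurable_measure_Iio μ))).add
      ((measurable_measure_Iio μ).pow_const 2)
  have g_toReal (x : α) : (g x).toReal =
      μ.real (Iic x) ^ 2 + μ.real (Iic x) * μ.real (Iio x) + μ.real (Iio x) ^ 2 := by
    simp only [g, measureReal_def]
    rw [ENNReal.toReal_add (by finiteness) (by finiteness),
      ENNReal.toReal_add (by finiteness) (by finiteness), ENNReal.toReal_mul,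
      ENNReal.toReal_pow, ENNReal.toReal_pow]
  have lintegral_g : ∫⁻ x, g x ∂μ = μ univ ^ 3 :=
    lintegral_sq_measure_Iic_add_mul_add_sq_measure_Iio μ
  have integrable_g : Integrable (fun x ↦ (g x).toReal) μ :=
    integrable_toReal_of_lintegral_ne_top hg.aemeasurable (by rw [lintegral_g]; finiteness)
  have integral_g : ∫ x, (g x).toReal ∂μ = μ.real univ ^ 3 := by
    rw [integral_toReal hg.aemeasurable (.of_forall fun x ↦ by finiteness), lintegral_g,
      ENNReal.toReal_pow, measureReal_def]
  simp_rw [midDistribution_sq, ← g_toReal]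
  rw [integral_sub (integrable_g.div_const 3)
      ((integrable_measureReal_singleton_pow μ 2).div_const 12), integral_div, integral_div,
    integral_g, integral_measureReal_singleton_pow μ hS two_ne_zero]

theorem midDistribution_mean_variance_general (μ : Measure α) [IsProbabilityMeasure μ] {S : Set α}
    (hS : ∀ x ∉ S, μ {x} = 0) :
    ∫ x, midDistribution μ x ∂μ = 1 / 2 ∧
      ∫ x, (midDistribution μ x - 1 / 2) ^ 2 ∂μ = (1 - ∑' x : S, μ.real {(x : α)} ^ 3) / 12 := by
  have mean : ∫ x, midDistribution μ x ∂μ = 1 / 2 := by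
    rw [integral_midDistribution, probReal_univ, one_pow]
  have variance_eq := ProbabilityTheory.variance_eq_sub (memLp_midDistribution μ 2)
  rw [ProbabilityTheory.variance_eq_integral (memLp_midDistribution μ 2).aemeasurable, mean]
    at variance_eq
  refine ⟨mean, variance_eq.trans ?_⟩
  simp only [Pi.pow_apply]
  rw [integral_midDistribution_sq μ hS, probReal_univ]
  ring

end LinearOrder

/-- **Mean and variance of the mid-distribution function (discrete case).** Let `μ` be a
purely atomic probability measure on `ℝ` with countable support `S` and point masses
`p(x) = μ{x}`. The mid-distribution function `G_mid(x) = μ(−∞,x] − p(x)/2` satisfies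
`∫ G_mid dμ = 1/2` and `∫ (G_mid − 1/2)² dμ = (1 − ∑_{x∈S} p(x)³)/12`. -/
theorem midDistribution_mean_variance
    (μ : Measure ℝ) [IsProbabilityMeasure μ]
    (S : Set ℝ) (hS : S.Countable) (hSsupp : μ Sᶜ = 0)
    (pm : ℝ → ℝ) (hpm : ∀ x, pm x = (μ {x}).toReal)
    (Gmid : ℝ → ℝ)
    (hGmid : ∀ x, Gmid x = (μ (Set.Iic x)).toReal - (1 / 2) * pm x) :
    (∫ x, Gmid x ∂μ = 1 / 2) ∧
    (∫ x, (Gmid x - 1 / 2) ^ 2 ∂μ = (1 - ∑' x : S, (pm x) ^ 3) / 12) := by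
  obtain ⟨rfl, rfl⟩ := And.intro (funext hpm) (funext hGmid)
  exact midDistribution_mean_variance_general μ fun x hx ↦
    measure_mono_null (singleton_subset_iff.mpr hx) hSsupp
end
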